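/- arXiv:1911.03994 — 4 statements merged into one kernel-verified Lean document; each statement's English description precedes it below -/
import Mathlib

section
/- Let C = (BΓᵀB + Γ + σ²I)⁻¹ and D = C·B (the widely linear equalizer coefficients), and suppose the matrix Γ + BΓᵀB + σ²I is invertible. Then for every vector y ∈ ℂⁿ, the real-only equalizer output equals 2A times the widely linear equalizer output: (2A(Γ + BΓᵀB)A† + (σ²/2)I)⁻¹ · (A(y + Bȳ)) = 2A·(Cy + Dȳ). -/
/-!
The matrix `U = 2A` is unitary, so the covariance `2 A S Aᴴ + (σ²/2) I` seen by the real-only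
equalizer is half the `U`-conjugate of `S + σ² I`, where `S = Γ + BΓᵀB`. Its inverse is therefore
`2 U (S + σ² I)⁻¹ Uᴴ`, and applying this to `A = U/2` cancels `Uᴴ U` and leaves `U (S + σ² I)⁻¹`,
which is `2A` times the widely linear equalizer.
-/

open Matrix

noncomputable def Amat (ν : ℕ) : Matrix (Fin (2*ν)) (Fin (2*ν)) ℂ :=
  Matrix.diagonal (fun i => if Even (i : ℕ) then (1/2 : ℂ) else -Complex.I/2)

noncomputable def Bmat (ν : ℕ) : Matrix (Fin (2*ν)) (Fin (2*ν)) ℂ :=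
  Matrix.diagonal (fun i => (-1 : ℂ) ^ (i : ℕ))

section UnitaryConjugation

variable {ι R : Type*} [Fintype ι] [DecidableEq ι] [CommRing R] [StarRing R]

theorem diagonal_mem_unitaryGroup {d : ι → R} (hd : ∀ i, d i ∈ unitary R) :
    diagonal d ∈ unitaryGroup ι R := by
  rw [mem_unitaryGroup_iff, star_eq_conjTranspose, diagonal_conjTranspose, diagonal_mul_diagonal,
    ← diagonal_one]
  exact congrArg diagonal (funext fun i => Unitary.mul_star_self_of_mem (hd i))

variable {U : Matrix ι ι R}

theorem unitary_conj_add_smul_one (hU : U ∈ unitaryGroup ι R) (S : Matrix ι ι R) (c : R) :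
    U * (S + c • 1) * Uᴴ = U * S * Uᴴ + c • 1 := by
  have hUU : U * Uᴴ = 1 := mem_unitaryGroup_iff.mp hU
  rw [mul_add, add_mul, mul_smul_one, smul_mul_assoc, hUU]

theorem inv_unitary_conj_mul (hU : U ∈ unitaryGroup ι R) (M : Matrix ι ι R) :
    (U * M * Uᴴ)⁻¹ * U = U * M⁻¹ := by
  have hUU : Uᴴ * U = 1 := mem_unitaryGroup_iff'.mp hU
  rw [Matrix.mul_inv_rev, Matrix.mul_inv_rev, inv_eq_right_inv hUU, inv_eq_left_inv hUU,
    Matrix.mul_assoc, Matrix.mul_assoc, hUU, mul_one]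

end UnitaryConjugation

section HalfUnitary

variable {ι K : Type*} [Fintype ι] [DecidableEq ι] [Field K] [StarRing K] [NeZero (2 : K)]
  {A : Matrix ι ι K}

theorem two_smul_conj_add_half_smul_one (hA : (2 : K) • A ∈ unitaryGroup ι K)
    (S : Matrix ι ι K) (s : K) :
    (2 : K) • (A * S * Aᴴ) + (s / 2) • 1 =
      ((2 : K) • A) * ((2 : K)⁻¹ • (S + s • 1)) * ((2 : K) • A)ᴴ := by
  have hconj : ((2 : K) • A) * ((2 : K)⁻¹ • S) * ((2 : K) • A)ᴴ = (2 : K) • (A * S * Aᴴ) := by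
    rw [smul_mul_smul_comm, mul_inv_cancel₀ two_ne_zero, one_smul, conjTranspose_smul, star_ofNat,
      mul_smul_comm]
  rw [smul_add, smul_smul, inv_mul_eq_div, unitary_conj_add_smul_one hA, hconj]

theorem inv_two_smul_conj_add_half_smul_one_mul (hA : (2 : K) • A ∈ unitaryGroup ι K)
    {S : Matrix ι ι K} {s : K} (hS : IsUnit (S + s • 1)) :
    ((2 : K) • (A * S * Aᴴ) + (s / 2) • 1)⁻¹ * A = ((2 : K) • A) * (S + s • 1)⁻¹ := by
  have h2 : (2 : K) ≠ 0 := two_ne_zero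
  let _ : Invertible (2 : K)⁻¹ := invertibleOfNonzero (inv_ne_zero h2)
  have hinv : ((2 : K)⁻¹ • (S + s • 1))⁻¹ = (2 : K) • (S + s • 1)⁻¹ := by
    rw [Matrix.inv_smul _ _ ((isUnit_iff_isUnit_det _).mp hS), invOf_eq_inv, inv_inv]
  calc ((2 : K) • (A * S * Aᴴ) + (s / 2) • 1)⁻¹ * A
      = (2 : K)⁻¹ • (((2 : K) • (A * S * Aᴴ) + (s / 2) • 1)⁻¹ * ((2 : K) • A)) := by
        rw [mul_smul_comm, inv_smul_smul₀ h2]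
    _ = (2 : K)⁻¹ • (((2 : K) • A) * ((2 : K)⁻¹ • (S + s • 1))⁻¹) := by
        rw [two_smul_conj_add_half_smul_one hA, inv_unitary_conj_mul hA]
    _ = ((2 : K) • A) * (S + s • 1)⁻¹ := by
        rw [hinv, mul_smul_comm, inv_smul_smul₀ h2]

theorem roe_eq_twoA_wle_general (hA : (2 : K) • A ∈ unitaryGroup ι K) (B Γ : Matrix ι ι K) (s : K)
    (hinv : IsUnit (Γ + B * Γᵀ * B + s • 1)) (y : ι → K) :
    ((2 : K) • (A * (Γ + B * Γᵀ * B) * Aᴴ) + (s / 2) • 1)⁻¹ *ᵥ (A *ᵥ (y + B *ᵥ star y)) =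
      (2 : K) • (A *ᵥ ((B * Γᵀ * B + Γ + s • 1)⁻¹ *ᵥ y +
        ((B * Γᵀ * B + Γ + s • 1)⁻¹ * B) *ᵥ star y)) := by
  rw [mulVec_mulVec, inv_two_smul_conj_add_half_smul_one_mul hA hinv, add_comm (B * Γᵀ * B),
    smul_mul_assoc, ← mulVec_mulVec, ← mulVec_add, smul_mulVec, mulVec_mulVec]

end HalfUnitary

theorem two_smul_Amat (ν : ℕ) :
    (2 : ℂ) • Amat ν = diagonal fun i : Fin (2 * ν) => if Even (i : ℕ) then 1 else -Complex.I := by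
  rw [Amat, ← diagonal_smul]
  congr 1
  funext i
  rw [Pi.smul_apply, smul_eq_mul, mul_ite, mul_div_cancel₀ _ two_ne_zero,
    mul_div_cancel₀ _ two_ne_zero]

theorem two_smul_Amat_mem_unitaryGroup (ν : ℕ) :
    (2 : ℂ) • Amat ν ∈ unitaryGroup (Fin (2 * ν)) ℂ := by
  rw [two_smul_Amat]
  refine diagonal_mem_unitaryGroup fun i => ?_
  split_ifs
  · exact one_mem _
  · simp [Unitary.mem_iff]

/-- ROE output equals 2A times the WLE output. -/
theorem roe_eq_twoA_wle (ν : ℕ) (hν : 1 ≤ ν) (σ2 : ℝ) (hσ : 0 < σ2)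
    (Γ : Matrix (Fin (2*ν)) (Fin (2*ν)) ℂ)
    (A B C D : Matrix (Fin (2*ν)) (Fin (2*ν)) ℂ)
    (hA : A = Amat ν) (hB : B = Bmat ν)
    (hC : C = (B * Γᵀ * B + Γ + (σ2 : ℂ) • 1)⁻¹)
    (hD : D = C * B)
    (hinv : IsUnit (Γ + B * Γᵀ * B + (σ2 : ℂ) • 1))
    (y : Fin (2*ν) → ℂ) :
    ((2:ℂ) • (A * (Γ + B * Γᵀ * B) * Aᴴ) + ((σ2 : ℂ)/2) • 1)⁻¹ *ᵥ
      (A *ᵥ (y + B *ᵥ star y)) =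
    (2:ℂ) • (A *ᵥ (C *ᵥ y + D *ᵥ star y)) := by
  subst hD hC hA
  exact roe_eq_twoA_wle_general (two_smul_Amat_mem_unitaryGroup ν) B Γ σ2 hinv y
end

section
/- If Γ is an n×n Hermitian complex matrix, then every entry of the matrix Γ_a = 2A(Γ + BΓᵀB)A† is real, i.e., Γ_a equals its entrywise complex conjugate. -/
/-!
`Γ_a` is four times the real part of `A Γ A†`: conjugation acts on `A` as right multiplication by
`B` and on the Hermitian matrix `Γ` as transposition, so `A (B Γᵀ B†) A†` is the entrywise
conjugate of `A Γ A†`, and adding the two gives a real matrix.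
-/

open Matrix

section StarRing

variable {m n R : Type*} [CommSemiring R] [StarRing R]

theorem map_conj_eq_transpose_of_isHermitian {Γ : Matrix n n R} (hΓ : Γ.IsHermitian) :
    Γ.map (starRingEnd R) = Γᵀ := by
  ext i j
  exact hΓ.apply j i

theorem map_conj_add_map_conj_self (M : Matrix m n R) :
    (M + M.map (starRingEnd R)).map (starRingEnd R) = M + M.map (starRingEnd R) := by
  ext i j
  simp [add_comm]

variable [Fintype n]

theorem mul_add_mul_conjTranspose_eq_add_map_conj {A : Matrix m n R} {B : Matrix n n R}
    (hA : A.map (starRingEnd R) = A * B) (Γ : Matrix n n R) :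
    A * (Γ + B * Γ.map (starRingEnd R) * Bᴴ) * Aᴴ =
      A * Γ * Aᴴ + (A * Γ * Aᴴ).map (starRingEnd R) := by
  have hAH : Aᴴ.map (starRingEnd R) = Bᴴ * Aᴴ := by
    rw [conjTranspose_map (starRingEnd R) fun _ ↦ rfl, hA, conjTranspose_mul]
  simp only [Matrix.map_mul, hA, hAH, Matrix.mul_add, Matrix.add_mul, Matrix.mul_assoc]

theorem gamma_a_real_general {c : R} (hc : IsSelfAdjoint c) {A : Matrix m n R} {B : Matrix n n R}
    (hA : A.map (starRingEnd R) = A * B) {Γ : Matrix n n R} (hΓ : Γ.IsHermitian) :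
    (c • (A * (Γ + B * Γᵀ * Bᴴ) * Aᴴ)).map (starRingEnd R) =
      c • (A * (Γ + B * Γᵀ * Bᴴ) * Aᴴ) := by
  rw [← map_conj_eq_transpose_of_isHermitian hΓ, mul_add_mul_conjTranspose_eq_add_map_conj hA,
    Matrix.map_smul' _ c _ (map_mul _), map_conj_add_map_conj_self, starRingEnd_apply, hc.star_eq]

end StarRing

theorem Amat_map_conj (ν : ℕ) : (Amat ν).map (starRingEnd ℂ) = Amat ν * Bmat ν := by
  rw [Amat, Bmat, diagonal_map (map_zero _), diagonal_mul_diagonal]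
  congr 1
  ext i
  rcases Nat.even_or_odd (i : ℕ) with hi | hi
  · simp [hi, Complex.conj_ofNat]
  · simp [hi, Nat.not_even_iff_odd.mpr hi, Complex.conj_ofNat, neg_div]

theorem Bmat_isHermitian (ν : ℕ) : (Bmat ν).IsHermitian :=
  isHermitian_diagonal_of_self_adjoint _ <| by
    ext i
    simp

theorem gamma_a_real (ν : ℕ) (hν : 1 ≤ ν)
    (A B : Matrix (Fin (2*ν)) (Fin (2*ν)) ℂ)
    (hA : A = Amat ν) (hB : B = Bmat ν)
    (Γ : Matrix (Fin (2*ν)) (Fin (2*ν)) ℂ) (hΓ : Γ.IsHermitian) :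
    ((2:ℂ) • (A * (Γ + B * Γᵀ * B) * Aᴴ)).map (starRingEnd ℂ) =
    (2:ℂ) • (A * (Γ + B * Γᵀ * B) * Aᴴ) := by
  subst hA hB
  simpa only [(Bmat_isHermitian ν).eq] using
    gamma_a_real_general (.ofNat 2) (Amat_map_conj ν) hΓ
end

section
/- Let Γ be an n×n Hermitian positive definite complex matrix and σ² > 0. Set T = 2AΓA† + (σ²/2)I and N = 2(AB)Γᵀ(AB)†. Then the average MMSE of the real-only equalizer decomposes exactly as that of the linear equalizer minus a nonnegative correction: (σ²/(4ν))·tr((2A(Γ + BΓᵀB)A† + (σ²/2)I)⁻¹) = (σ²/(2ν))·tr((Γ + σ²I)⁻¹) − (σ²/(4ν))·tr(T⁻¹(N⁻¹ + T⁻¹)⁻¹T⁻¹). -/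
open Matrix ComplexOrder

/-!
Because `A` is half a unitary matrix, `T = 2 A (Γ + σ² I) A†` is unitarily similar to
`(Γ + σ² I) / 2`, so `tr T⁻¹ = 2 tr (Γ + σ² I)⁻¹`. The matrix inverted on the left-hand side is
`T + N`, and the Woodbury identity writes its inverse as `T⁻¹` minus the correction.
-/

section Inverse

variable {n R : Type*} [Fintype n] [DecidableEq n] [CommRing R]

lemma inv_add_eq_inv_sub_of_isUnit {T N : Matrix n n R} (hT : IsUnit T) (hN : IsUnit N)
    (hTN : IsUnit (T + N)) :
    (T + N)⁻¹ = T⁻¹ - T⁻¹ * (N⁻¹ + T⁻¹)⁻¹ * T⁻¹ := by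
  have hinv : IsUnit (N⁻¹ + T⁻¹) := by
    rw [Matrix.inv_add_inv (iff_of_true hN hT), add_comm N T]
    exact ((isUnit_nonsing_inv_iff.2 hN).mul hTN).mul (isUnit_nonsing_inv_iff.2 hT)
  simpa only [Matrix.mul_one, Matrix.one_mul] using
    Matrix.add_mul_mul_inv_eq_sub T 1 N 1 hT hN
      (by simpa only [Matrix.mul_one, Matrix.one_mul] using hinv)

lemma trace_inv_mul_cycle (L M P : Matrix n n R) :
    ((L * M * P)⁻¹).trace = ((M * (P * L))⁻¹).trace := by
  simp only [Matrix.mul_inv_rev, Matrix.mul_assoc]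
  exact trace_mul_cycle' _ _ _

end Inverse

section ScaledInverse

variable {n K : Type*} [Fintype n] [DecidableEq n] [Field K]

lemma mul_eq_smul_one_comm {L P : Matrix n n K} {c : K} (hc : c ≠ 0) (hLP : L * P = c • 1) :
    P * L = c • 1 := by
  have hright : L * (c⁻¹ • P) = 1 := by
    rw [Matrix.mul_smul, hLP, inv_smul_smul₀ hc]
  rw [← mul_eq_one_comm.1 hright, Matrix.smul_mul, smul_inv_smul₀ hc]

lemma trace_inv_mul_mul_of_mul_eq_smul_one {L P : Matrix n n K} {c : K} (hc : c ≠ 0)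
    (hLP : L * P = c • 1) (M : Matrix n n K) :
    ((L * M * P)⁻¹).trace = c⁻¹ * (M⁻¹).trace := by
  have hscalar : (c • (1 : Matrix n n K))⁻¹ = c⁻¹ • 1 :=
    inv_eq_right_inv <| by rw [Matrix.mul_smul, Matrix.mul_one, inv_smul_smul₀ hc]
  rw [trace_inv_mul_cycle, mul_eq_smul_one_comm hc hLP, Matrix.mul_inv_rev, hscalar,
    Matrix.smul_mul, Matrix.one_mul, trace_smul, smul_eq_mul]

variable [NeZero (2 : K)] [StarRing K]

lemma trace_inv_two_smul_conj_add {A : Matrix n n K} (hA : A * Aᴴ = (1 / 4 : K) • 1)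
    (Γ : Matrix n n K) (s : K) :
    (((2 : K) • (A * Γ * Aᴴ) + (s / 2) • 1)⁻¹).trace = 2 * ((Γ + s • 1)⁻¹).trace := by
  have h_two : (2 : K) ≠ 0 := two_ne_zero
  have h_half : (2 : K) * (1 / 4) = 2⁻¹ := by
    rw [show (4 : K) = 2 * 2 by norm_num]
    field_simp
  have hAA : A * ((2 : K) • Aᴴ) = (2⁻¹ : K) • 1 := by
    rw [Matrix.mul_smul, hA, smul_smul, h_half]
  have hfactor : (2 : K) • (A * Γ * Aᴴ) + (s / 2) • 1 = A * (Γ + s • 1) * ((2 : K) • Aᴴ) := by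
    rw [Matrix.mul_add, Matrix.add_mul, Matrix.mul_smul A s, Matrix.mul_one, Matrix.smul_mul, hAA,
      smul_smul, Matrix.mul_smul, div_eq_mul_inv]
  rw [hfactor, trace_inv_mul_mul_of_mul_eq_smul_one (inv_ne_zero h_two) hAA, inv_inv]

theorem mmse_decomposition_general {A B Γ Λ T N : Matrix n n K} {s : K}
    (hA : A * Aᴴ = (1 / 4 : K) • 1)
    (hT : T = (2 : K) • (A * Γ * Aᴴ) + (s / 2) • 1)
    (hN : N = (2 : K) • ((A * B) * Λ * (A * B)ᴴ))
    (hT_unit : IsUnit T) (hN_unit : IsUnit N) (hTN_unit : IsUnit (T + N)) :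
    (((2 : K) • (A * (Γ + B * Λ * Bᴴ) * Aᴴ) + (s / 2) • 1)⁻¹).trace =
      2 * ((Γ + s • 1)⁻¹).trace - (T⁻¹ * (N⁻¹ + T⁻¹)⁻¹ * T⁻¹).trace := by
  have hsum : (2 : K) • (A * (Γ + B * Λ * Bᴴ) * Aᴴ) + (s / 2) • 1 = T + N := by
    rw [hT, hN, conjTranspose_mul]
    simp only [Matrix.mul_add, Matrix.add_mul, smul_add, Matrix.mul_assoc]
    abel
  rw [hsum, inv_add_eq_inv_sub_of_isUnit hT_unit hN_unit hTN_unit, trace_sub, hT,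
    trace_inv_two_smul_conj_add hA]

end ScaledInverse

lemma Amat_mul_conjTranspose (ν : ℕ) : Amat ν * (Amat ν)ᴴ = (1 / 4 : ℂ) • 1 := by
  rw [Amat, diagonal_conjTranspose, diagonal_mul_diagonal, smul_one_eq_diagonal]
  congr 1
  ext i
  rw [Pi.star_apply]
  split_ifs
  · norm_num
  · simp only [star_div₀, star_neg, Complex.star_def, Complex.conj_I, map_ofNat]
    linear_combination (-1 / 4 : ℂ) * Complex.I_mul_I

lemma isUnit_Amat (ν : ℕ) : IsUnit (Amat ν) := by
  refine IsUnit.of_mul_eq_one ((4 : ℂ) • (Amat ν)ᴴ) ?_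
  rw [Matrix.mul_smul, Amat_mul_conjTranspose, smul_smul]
  norm_num

lemma Bmat_conjTranspose (ν : ℕ) : (Bmat ν)ᴴ = Bmat ν := by
  rw [Bmat, diagonal_conjTranspose]
  congr 1
  ext i
  simp

lemma Bmat_mul_self (ν : ℕ) : Bmat ν * Bmat ν = 1 := by
  simp only [Bmat, diagonal_mul_diagonal, ← mul_pow, neg_mul_neg, mul_one, one_pow, diagonal_one]

lemma isUnit_Bmat (ν : ℕ) : IsUnit (Bmat ν) :=
  IsUnit.of_mul_eq_one _ (Bmat_mul_self ν)

theorem mmse_decomposition (ν : ℕ) (hν : 1 ≤ ν) (σ2 : ℝ) (hσ : 0 < σ2)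
    (A B : Matrix (Fin (2*ν)) (Fin (2*ν)) ℂ)
    (hA : A = Amat ν) (hB : B = Bmat ν)
    (Γ : Matrix (Fin (2*ν)) (Fin (2*ν)) ℂ) (hΓ : Γ.PosDef)
    (T N : Matrix (Fin (2*ν)) (Fin (2*ν)) ℂ)
    (hT : T = (2:ℂ) • (A * Γ * Aᴴ) + ((σ2 : ℂ)/2) • 1)
    (hN : N = (2:ℂ) • ((A * B) * Γᵀ * (A * B)ᴴ)) :
    ((σ2 : ℂ)/(4*ν)) * (((2:ℂ) • (A * (Γ + B * Γᵀ * B) * Aᴴ) + ((σ2 : ℂ)/2) • 1)⁻¹).trace =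
    ((σ2 : ℂ)/(2*ν)) * ((Γ + (σ2 : ℂ) • 1)⁻¹).trace -
    ((σ2 : ℂ)/(4*ν)) * (T⁻¹ * (N⁻¹ + T⁻¹)⁻¹ * T⁻¹).trace := by
  subst hA hB
  have hσ_half : (0 : ℂ) < (σ2 : ℂ) / 2 := by exact_mod_cast half_pos hσ
  have hT_pos : T.PosDef := hT ▸
    (((isUnit_Amat ν).posDef_star_right_conjugate_iff.2 hΓ).smul two_pos).add
      (PosDef.one.smul hσ_half)
  have hN_pos : N.PosDef := hN ▸
    (((isUnit_Amat ν).mul (isUnit_Bmat ν)).posDef_star_right_conjugate_iff.2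
      hΓ.transpose).smul two_pos
  have htrace := mmse_decomposition_general (Amat_mul_conjTranspose ν) hT hN
    hT_pos.isUnit hN_pos.isUnit (hT_pos.add hN_pos).isUnit
  rw [Bmat_conjTranspose] at htrace
  rw [htrace]
  ring
end

section
/- Let H be an m×n complex matrix, set Ĥ = 2HA†, Ĥ_R = (Ĥ + Ĥ*)/2 and Ĥ_I = (Ĥ − Ĥ*)/(2j). Let a ∈ ℂⁿ have real entries (ā = a), let z ∈ ℂᵐ, and set r = Ĥa + z, Γ = H†H, x = 2A†a, and y = Γx + H†z. Then the pre-processed real input to the equalizer coincides with the post-processed matched-filter output: Ĥ_Rᵀ·((r + r̄)/2) + Ĥ_Iᵀ·((r − r̄)/(2j)) = A(y + Bȳ). -/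
open Matrix

/-!
For a complex matrix `M` and vector `r`, polarization gives
`(Re M)ᵀ (Re r) + (Im M)ᵀ (Im r) = Re (Mᴴ r)`. For `M = 2 H Aᴴ` one has `Mᴴ r = 2 A (Hᴴ r)`, and
`Hᴴ r` is the matched-filter output `y`, so the left-hand side is `A y + conj (A y)`. The sign
matrix `B` is chosen so that `A B` is the entrywise conjugate of `A`, whence
`conj (A y) = A B (conj y)`.
-/

theorem add_mulVec_add_sub_sub_mulVec_sub {m n R : Type*} [Fintype n] [NonUnitalNonAssocRing R]
    (M N : Matrix m n R) (u v : n → R) :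
    (M + N) *ᵥ (u + v) - (M - N) *ᵥ (u - v) = (2 : ℕ) • (M *ᵥ v + N *ᵥ u) := by
  simp only [add_mulVec, sub_mulVec, mulVec_add, mulVec_sub]
  abel

theorem star_mulVec_eq_map_starRingEnd_mulVec {m n R : Type*} [Fintype n] [CommSemiring R]
    [StarRing R] (M : Matrix m n R) (v : n → R) :
    star (M *ᵥ v) = M.map (starRingEnd R) *ᵥ star v := by
  ext i
  exact RingHom.map_mulVec (starRingEnd R) M v i

theorem re_transpose_mulVec_re_add_im_transpose_mulVec_im {m n : Type*} [Fintype m]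
    (M : Matrix m n ℂ) (r : m → ℂ) :
    ((2 : ℂ)⁻¹ • (M + M.map (starRingEnd ℂ)))ᵀ *ᵥ ((2 : ℂ)⁻¹ • (r + star r)) +
        ((2 * Complex.I : ℂ)⁻¹ • (M - M.map (starRingEnd ℂ)))ᵀ *ᵥ
          ((2 * Complex.I : ℂ)⁻¹ • (r - star r)) =
      (2 : ℂ)⁻¹ • (Mᴴ *ᵥ r + star (Mᴴ *ᵥ r)) := by
  have hI : (2 * Complex.I)⁻¹ * (2 * Complex.I)⁻¹ = -((2 : ℂ)⁻¹ * 2⁻¹) := by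
    rw [mul_inv, mul_mul_mul_comm, ← mul_inv Complex.I, Complex.I_mul_I]
    norm_num
  have hconj : (M.map (starRingEnd ℂ))ᵀ = Mᴴ := rfl
  have hstar : star (Mᴴ *ᵥ r) = Mᵀ *ᵥ star r := by
    rw [star_mulVec, conjTranspose_conjTranspose, mulVec_transpose]
  simp only [transpose_smul, transpose_add, transpose_sub, hconj, smul_mulVec, mulVec_smul,
    smul_smul, hI, neg_smul, ← sub_eq_add_neg, ← smul_sub]
  rw [add_mulVec_add_sub_sub_mulVec_sub, hstar, add_comm (Mᵀ *ᵥ star r)]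
  module

theorem preprocessing_eq_postprocessing_general {l m n : Type*}
    [Fintype l] [Fintype m] [Fintype n]
    (A : Matrix l n ℂ) (B : Matrix n n ℂ) (hAB : A * B = A.map (starRingEnd ℂ))
    (H : Matrix m n ℂ) (Hhat HR HI : Matrix m l ℂ)
    (hHhat : Hhat = (2 : ℂ) • (H * Aᴴ))
    (hHR : HR = (2 : ℂ)⁻¹ • (Hhat + Hhat.map (starRingEnd ℂ)))
    (hHI : HI = (2 * Complex.I : ℂ)⁻¹ • (Hhat - Hhat.map (starRingEnd ℂ)))
    (a : l → ℂ) (x : n → ℂ) (z r : m → ℂ) (Γ : Matrix n n ℂ) (y : n → ℂ)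
    (hr : r = Hhat *ᵥ a + z)
    (hΓ : Γ = Hᴴ * H)
    (hx : x = (2 : ℂ) • (Aᴴ *ᵥ a))
    (hy : y = Γ *ᵥ x + Hᴴ *ᵥ z) :
    HRᵀ *ᵥ ((2 : ℂ)⁻¹ • (r + star r)) + HIᵀ *ᵥ ((2 * Complex.I : ℂ)⁻¹ • (r - star r)) =
      A *ᵥ (y + B *ᵥ star y) := by
  have hmatched : y = Hᴴ *ᵥ r := by
    simp only [hy, hr, hΓ, hx, hHhat, mulVec_add, mulVec_smul, smul_mulVec, mulVec_mulVec,
      Matrix.mul_assoc]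
  have hHhat_mulVec : Hhatᴴ *ᵥ r = (2 : ℂ) • (A *ᵥ y) := by
    simp only [hHhat, hmatched, conjTranspose_smul, conjTranspose_mul, conjTranspose_conjTranspose,
      star_ofNat, smul_mulVec, mulVec_mulVec]
  have hstar : star (A *ᵥ y) = A *ᵥ (B *ᵥ star y) := by
    rw [star_mulVec_eq_map_starRingEnd_mulVec, ← hAB, mulVec_mulVec]
  calc HRᵀ *ᵥ ((2 : ℂ)⁻¹ • (r + star r)) + HIᵀ *ᵥ ((2 * Complex.I : ℂ)⁻¹ • (r - star r))
      = (2 : ℂ)⁻¹ • (Hhatᴴ *ᵥ r + star (Hhatᴴ *ᵥ r)) := by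
        rw [hHR, hHI, re_transpose_mulVec_re_add_im_transpose_mulVec_im]
    _ = A *ᵥ y + star (A *ᵥ y) := by
        rw [hHhat_mulVec, star_smul, star_ofNat, ← smul_add, inv_smul_smul₀ two_ne_zero]
    _ = A *ᵥ (y + B *ᵥ star y) := by rw [hstar, mulVec_add]

theorem Amat_mul_Bmat (ν : ℕ) : Amat ν * Bmat ν = (Amat ν).map (starRingEnd ℂ) := by
  rw [Amat, Bmat, diagonal_mul_diagonal, diagonal_map (map_zero _)]
  congr 1
  ext i
  rcases Nat.even_or_odd (i : ℕ) with h | h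
  · simp [h, h.neg_one_pow, Complex.conj_ofNat]
  · simp [Nat.not_even_iff_odd.mpr h, h.neg_one_pow, Complex.conj_ofNat, neg_div]

theorem preprocessing_eq_postprocessing (ν m : ℕ) (hν : 1 ≤ ν) (hm : 1 ≤ m)
    (A B : Matrix (Fin (2*ν)) (Fin (2*ν)) ℂ)
    (hA : A = Amat ν) (hB : B = Bmat ν)
    (H : Matrix (Fin m) (Fin (2*ν)) ℂ)
    (Hhat HR HI : Matrix (Fin m) (Fin (2*ν)) ℂ)
    (hHhat : Hhat = (2:ℂ) • (H * Aᴴ))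
    (hHR : HR = ((2:ℂ))⁻¹ • (Hhat + Hhat.map (starRingEnd ℂ)))
    (hHI : HI = ((2 * Complex.I : ℂ))⁻¹ • (Hhat - Hhat.map (starRingEnd ℂ)))
    (a x : Fin (2*ν) → ℂ) (ha : star a = a)
    (z : Fin m → ℂ) (r : Fin m → ℂ)
    (Γ : Matrix (Fin (2*ν)) (Fin (2*ν)) ℂ) (y : Fin (2*ν) → ℂ)
    (hr : r = Hhat *ᵥ a + z)
    (hΓ : Γ = Hᴴ * H)
    (hx : x = (2:ℂ) • (Aᴴ *ᵥ a))
    (hy : y = Γ *ᵥ x + Hᴴ *ᵥ z) :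
    HRᵀ *ᵥ (((2:ℂ))⁻¹ • (r + star r)) + HIᵀ *ᵥ (((2 * Complex.I : ℂ))⁻¹ • (r - star r)) =
    A *ᵥ (y + B *ᵥ star y) :=
  preprocessing_eq_postprocessing_general A B (by rw [hA, hB, Amat_mul_Bmat]) H Hhat HR HI
    hHhat hHR hHI a x z r Γ y hr hΓ hx hy
end
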